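/- Let Σ be a finite alphabet, L ⊆ Σ* a regular language with ε ∈ L, and let a, b, c be three pairwise distinct symbols not in Σ. Let Σ' = Σ ∪ {a,b,c} and L'' = {a}·((L·{c})*·L) ∪ {b}·(Σ ∪ {c})*. Then for every linear order ≺ on Σ' satisfying a ≺ b ≺ c: L = Σ* if and only if L'' is Wheeler with respect to (Σ',≺). -/

import Mathlib

/-!
Common framework: words over an ordered alphabet, co-lexicographic order,
(partial) DFAs and NFAs, Wheeler automata and Wheeler languages,
following "Ordering regular languages: a danger zone".
-/

namespace WheelerPaper

/-- Strict co-lexicographic order on words: compare the reverses lexicographically. -/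
def Colex {A : Type} [LinearOrder A] (x y : List A) : Prop :=
  List.Lex (· < ·) x.reverse y.reverse

/-- Non-strict co-lexicographic order. -/
def ColexLE {A : Type} [LinearOrder A] (x y : List A) : Prop :=
  Colex x y ∨ x = y

/-- Right context `α⁻¹L` of a word `α` with respect to a language `L`. -/
def rc {A : Type} (L : Set (List A)) (α : List A) : Set (List A) :=
  {γ | α ++ γ ∈ L}

/-- `Pref L`: the set of prefixes of words of `L`. -/
def Pref {A : Type} (L : Set (List A)) : Set (List A) :=
  {α | ∃ β, α ++ β ∈ L}

/-- `wpow γ i` is `γ^i`, the `i`-fold concatenation of the word `γ`. -/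
def wpow {A : Type} (γ : List A) : ℕ → List A
  | 0 => []
  | n + 1 => γ ++ wpow γ n

/-- A DFA with a possibly partial transition function. -/
structure PDFA (A : Type) (Q : Type) where
  init : Q
  trans : Q → A → Option Q
  accept : Q → Prop

/-- Extended (partial) transition function of a `PDFA`. -/
def PDFA.evalFrom {A Q : Type} (M : PDFA A Q) : Q → List A → Option Q
  | q, [] => some q
  | q, a :: w => (M.trans q a).bind fun q' => PDFA.evalFrom M q' w

/-- The language accepted by a `PDFA`. -/
def PDFA.accepts {A Q : Type} (M : PDFA A Q) : Set (List A) :=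
  {w | ∃ q, M.evalFrom M.init w = some q ∧ M.accept q}

/-- A `PDFA` is trim if every state is reachable from the initial state and
every state can reach some accepting state. -/
def PDFA.Trim {A Q : Type} (M : PDFA A Q) : Prop :=
  (∀ q : Q, ∃ α, M.evalFrom M.init α = some q) ∧
  (∀ q : Q, ∃ α q', M.evalFrom q α = some q' ∧ M.accept q')

/-- `r` is a Wheeler order for the DFA `M`: a strict total order on states whose
minimum is the initial state, the initial state has no incoming transitions, and
the two Wheeler conditions hold. -/
def IsWheelerOrder {A Q : Type} [LinearOrder A] (M : PDFA A Q) (r : Q → Q → Prop) : Prop :=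
  IsStrictTotalOrder Q r ∧
  (∀ q : Q, q ≠ M.init → r M.init q) ∧
  (∀ (q : Q) (a : A), M.trans q a ≠ some M.init) ∧
  (∀ (u₁ : Q) (a₁ : A) (v₁ : Q) (u₂ : Q) (a₂ : A) (v₂ : Q),
     M.trans u₁ a₁ = some v₁ → M.trans u₂ a₂ = some v₂ →
     (a₁ < a₂ → r v₁ v₂) ∧ (a₁ = a₂ → r u₁ u₂ → (r v₁ v₂ ∨ v₁ = v₂)))

/-- A language is Wheeler (w.r.t. the given order on the alphabet) if it is
recognized by some Wheeler DFA. -/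
def IsWheelerLang {A : Type} [LinearOrder A] (L : Set (List A)) : Prop :=
  ∃ (n : ℕ) (M : PDFA A (Fin n)) (r : Fin n → Fin n → Prop),
    IsWheelerOrder M r ∧ M.accepts = L

/-- A language is regular if it is recognized by some finite-state (partial) DFA. -/
def IsRegular {A : Type} (L : Set (List A)) : Prop :=
  ∃ (k : ℕ) (M : PDFA A (Fin k)), M.accepts = L

/-- The input-consistent convex refinement `≡^c_L` of the Myhill–Nerode
equivalence: same right context, same last character (or both empty), and every
word of `Pref L` co-lexicographically between the two words has the same right
context. -/
def EquivC {A : Type} [LinearOrder A] (L : Set (List A)) (α β : List A) : Prop :=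
  rc L α = rc L β ∧ α.getLast? = β.getLast? ∧
  ∀ γ ∈ Pref L,
    ((ColexLE α γ ∧ ColexLE γ β) ∨ (ColexLE β γ ∧ ColexLE γ α)) →
    rc L γ = rc L α

/-- An NFA with a single initial state. -/
structure NFA' (A : Type) (Q : Type) where
  init : Q
  trans : Q → A → Set Q
  accept : Q → Prop

/-- One step of an `NFA'` on a set of states. -/
def NFA'.stepSet {A Q : Type} (M : NFA' A Q) (S : Set Q) (a : A) : Set Q :=
  {q | ∃ p ∈ S, q ∈ M.trans p a}

/-- Extended transition function of an `NFA'` on sets of states. -/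
def NFA'.evalFrom {A Q : Type} (M : NFA' A Q) : Set Q → List A → Set Q
  | S, [] => S
  | S, a :: w => NFA'.evalFrom M (M.stepSet S a) w

/-- The language accepted by an `NFA'`. -/
def NFA'.accepts {A Q : Type} (M : NFA' A Q) : Set (List A) :=
  {w | ∃ q ∈ M.evalFrom {M.init} w, M.accept q}

/-- An `NFA'` is trim if every state is reachable from the initial state and
every state can reach some accepting state. -/
def NFA'.Trim {A Q : Type} (M : NFA' A Q) : Prop :=
  (∀ q : Q, ∃ α, q ∈ M.evalFrom {M.init} α) ∧
  (∀ q : Q, ∃ α, ∃ q' ∈ M.evalFrom {q} α, M.accept q')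

/-- `r` is a Wheeler order for the NFA `M`. -/
def IsWheelerNFAOrder {A Q : Type} [LinearOrder A] (M : NFA' A Q) (r : Q → Q → Prop) : Prop :=
  IsStrictTotalOrder Q r ∧
  (∀ q : Q, q ≠ M.init → r M.init q) ∧
  (∀ (q : Q) (a : A), M.init ∉ M.trans q a) ∧
  (∀ (u₁ : Q) (a₁ : A) (v₁ : Q) (u₂ : Q) (a₂ : A) (v₂ : Q),
     v₁ ∈ M.trans u₁ a₁ → v₂ ∈ M.trans u₂ a₂ →
     (a₁ < a₂ → r v₁ v₂) ∧ (a₁ = a₂ → r u₁ u₂ → (r v₁ v₂ ∨ v₁ = v₂)))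

/-- `I` is an interval with respect to the strict order `r`. -/
def IsIntervalRel {Q : Type} (r : Q → Q → Prop) (I : Set Q) : Prop :=
  ∀ x y z : Q, (r x y ∨ x = y) → (r y z ∨ y = z) → x ∈ I → z ∈ I → y ∈ I

/-- The class of star-free languages: built from `∅`, `{ε}` and the singletons
`{a}` by union, concatenation and complement. -/
inductive StarFree {A : Type} : Set (List A) → Prop
  | empty : StarFree ∅
  | eps : StarFree {[]}
  | single (a : A) : StarFree {[a]}
  | union {L₁ L₂ : Set (List A)} : StarFree L₁ → StarFree L₂ → StarFree (L₁ ∪ L₂)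
  | concat {L₁ L₂ : Set (List A)} : StarFree L₁ → StarFree L₂ →
      StarFree {w | ∃ u v, u ∈ L₁ ∧ v ∈ L₂ ∧ w = u ++ v}
  | compl {L : Set (List A)} : StarFree L → StarFree Lᶜ


/-- The language of all words over the sub-alphabet `S`. -/
def wordsOver {A : Type} (S : Set A) : Language A := {w | ∀ x ∈ w, x ∈ S}


section Statement9

open Computability

/-!
The converse direction rests on the fact that a Wheeler DFA maps the co-lexicographic order
monotonically to its states, so that along a co-lexicographically increasing sequence of prefixes
of a Wheeler language the right context is eventually constant. For `L''` consider
`a ≺ b ≺ ac ≺ bc ≺ acc ≺ bcc ≺ ⋯`: some `a cⁿ` and `b cⁿ` have the same right context, and since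
every word over `S` continues `b cⁿ`, every such word continues `a cⁿ`, that is, belongs to `L`.

If `L = S*`, denesting of the Kleene star turns `L''` into `{a, b}·(S ∪ {c})*`, which is recognized
by an automaton that only remembers the last letter read. Its states, ordered like the letters,
satisfy the Wheeler conditions for trivial reasons.
-/

section PDFA

variable {A Q Q' : Type}

theorem PDFA.evalFrom_append (M : PDFA A Q) (q : Q) (u v : List A) :
    M.evalFrom q (u ++ v) = (M.evalFrom q u).bind fun q' => M.evalFrom q' v := by
  induction u generalizing q with
  | nil => rfl
  | cons x u ih => simp only [List.cons_append, PDFA.evalFrom, ih, Option.bind_assoc]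

theorem PDFA.evalFrom_concat_eq_some {M : PDFA A Q} {q q' : Q} {u : List A} {x : A} :
    M.evalFrom q (u ++ [x]) = some q' ↔ ∃ p, M.evalFrom q u = some p ∧ M.trans p x = some q' := by
  simp [PDFA.evalFrom_append, PDFA.evalFrom, Option.bind_eq_some_iff]

/-- The language accepted by `M` when started in the state `q`. -/
def PDFA.acceptsFrom (M : PDFA A Q) (q : Q) : Set (List A) :=
  {w | ∃ q', M.evalFrom q w = some q' ∧ M.accept q'}

theorem PDFA.nil_mem_acceptsFrom {M : PDFA A Q} {q : Q} : [] ∈ M.acceptsFrom q ↔ M.accept q := by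
  simp [PDFA.acceptsFrom, PDFA.evalFrom]

theorem PDFA.append_mem_acceptsFrom {M : PDFA A Q} {q : Q} {u v : List A} :
    u ++ v ∈ M.acceptsFrom q ↔ ∃ q', M.evalFrom q u = some q' ∧ v ∈ M.acceptsFrom q' := by
  simp only [PDFA.acceptsFrom, Set.mem_ofPred_eq, PDFA.evalFrom_append, Option.bind_eq_some_iff]
  grind

theorem PDFA.cons_mem_acceptsFrom {M : PDFA A Q} {q : Q} {x : A} {w : List A} :
    x :: w ∈ M.acceptsFrom q ↔ ∃ q', M.trans q x = some q' ∧ w ∈ M.acceptsFrom q' := by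
  rw [← List.singleton_append, PDFA.append_mem_acceptsFrom]
  simp [PDFA.evalFrom]

theorem PDFA.rc_accepts {M : PDFA A Q} {α : List A} {q : Q} (h : M.evalFrom M.init α = some q) :
    rc M.accepts α = M.acceptsFrom q := by
  ext γ
  change α ++ γ ∈ M.acceptsFrom M.init ↔ _
  simp [PDFA.append_mem_acceptsFrom, h]

theorem PDFA.exists_evalFrom_of_mem_Pref {M : PDFA A Q} {α : List A} (h : α ∈ Pref M.accepts) :
    ∃ q, M.evalFrom M.init α = some q := by
  obtain ⟨β, hβ⟩ := h
  obtain ⟨q, hq, -⟩ := PDFA.append_mem_acceptsFrom.1 hβ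
  exact ⟨q, hq⟩

/-- The automaton obtained from `M` by renaming the states along `e`. -/
def PDFA.reindex (M : PDFA A Q) (e : Q ≃ Q') : PDFA A Q' where
  init := e M.init
  trans q x := (M.trans (e.symm q) x).map e
  accept q := M.accept (e.symm q)

theorem PDFA.acceptsFrom_reindex (M : PDFA A Q) (e : Q ≃ Q') (q : Q) :
    (M.reindex e).acceptsFrom (e q) = M.acceptsFrom q := by
  ext w
  induction w generalizing q with
  | nil => simp [PDFA.nil_mem_acceptsFrom, PDFA.reindex]
  | cons x w ih =>
    have htrans : (M.reindex e).trans (e q) x = (M.trans q x).map e := by simp [PDFA.reindex]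
    simp [PDFA.cons_mem_acceptsFrom, htrans, ih]

theorem PDFA.accepts_reindex (M : PDFA A Q) (e : Q ≃ Q') : (M.reindex e).accepts = M.accepts :=
  M.acceptsFrom_reindex e M.init

theorem IsWheelerOrder.reindex [LinearOrder A] {M : PDFA A Q} {r : Q → Q → Prop}
    (hr : IsWheelerOrder M r) (e : Q ≃ Q') :
    IsWheelerOrder (M.reindex e) (e.symm ⁻¹'o r) := by
  obtain ⟨hsto, hmin, hinit, htrans⟩ := hr
  refine ⟨(RelIso.preimage e.symm r).toRelEmbedding.isStrictTotalOrder, fun q hq => ?_,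
    fun q x h => ?_, fun u₁ a₁ v₁ u₂ a₂ v₂ h₁ h₂ => ?_⟩
  · have hne : e.symm q ≠ M.init := fun h => hq (e.symm_apply_eq.1 h)
    simpa [PDFA.reindex] using hmin _ hne
  · exact hinit (e.symm q) x (by simpa [PDFA.reindex] using h)
  · obtain ⟨w₁, hw₁, rfl⟩ := Option.map_eq_some_iff.1 h₁
    obtain ⟨w₂, hw₂, rfl⟩ := Option.map_eq_some_iff.1 h₂
    simpa using htrans _ _ _ _ _ _ hw₁ hw₂

theorem IsWheelerOrder.isWheelerLang_accepts [LinearOrder A] [Finite Q] {M : PDFA A Q}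
    {r : Q → Q → Prop} (hr : IsWheelerOrder M r) : IsWheelerLang M.accepts :=
  ⟨_, _, _, hr.reindex (Finite.equivFin Q), M.accepts_reindex _⟩

end PDFA

section Colex

variable {A Q : Type} [LinearOrder A]

theorem not_colex_nil {u : List A} : ¬ Colex u [] := by
  simp [Colex]

theorem colex_concat_concat {u v : List A} {x y : A} :
    Colex (u ++ [x]) (v ++ [y]) ↔ x < y ∨ x = y ∧ Colex u v := by
  simp only [Colex, List.reverse_concat, List.cons_lex_cons_iff]

theorem IsWheelerOrder.rel_or_eq_of_colex {M : PDFA A Q} {r : Q → Q → Prop}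
    (hr : IsWheelerOrder M r) {α β : List A} {p q : Q} (hαβ : Colex α β)
    (hp : M.evalFrom M.init α = some p) (hq : M.evalFrom M.init β = some q) :
    r p q ∨ p = q := by
  obtain ⟨-, hmin, -, htrans⟩ := hr
  induction α using List.reverseRecOn generalizing β p q with
  | nil =>
    obtain rfl : M.init = p := Option.some.inj hp
    exact (eq_or_ne M.init q).elim .inr fun hne => .inl (hmin q hne.symm)
  | append_singleton α x ih =>
    rcases List.eq_nil_or_concat' β with rfl | ⟨β, y, rfl⟩
    · exact absurd hαβ not_colex_nil
    obtain ⟨p', hp', hpx⟩ := PDFA.evalFrom_concat_eq_some.1 hp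
    obtain ⟨q', hq', hqy⟩ := PDFA.evalFrom_concat_eq_some.1 hq
    obtain ⟨hlt, hle⟩ := htrans _ _ _ _ _ _ hpx hqy
    rcases colex_concat_concat.1 hαβ with hxy | ⟨rfl, hαβ'⟩
    · exact .inl (hlt hxy)
    · rcases ih hαβ' hp' hq' with hpq | rfl
      · exact hle rfl hpq
      · exact .inr (Option.some.inj (hpx.symm.trans hqy))

theorem exists_forall_ge_eq_of_rel_or_eq [Finite Q] {r : Q → Q → Prop} [IsStrictOrder Q r]
    {f : ℕ → Q} (hf : ∀ n, r (f n) (f (n + 1)) ∨ f n = f (n + 1)) :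
    ∃ N, ∀ n ≥ N, f n = f N := by
  let _ : PartialOrder Q := partialOrderOfSO r
  have hmono : Monotone f := monotone_nat_of_le_succ fun n => (hf n).symm
  obtain ⟨N, hN⟩ := WellFoundedGT.monotone_chain_condition ⟨f, hmono⟩
  exact ⟨N, fun n hn => (hN n hn).symm⟩

theorem IsWheelerLang.exists_forall_ge_rc_eq {L : Set (List A)} (hL : IsWheelerLang L)
    {s : ℕ → List A} (hs : ∀ n, s n ∈ Pref L) (hmono : ∀ n, Colex (s n) (s (n + 1))) :
    ∃ N, ∀ n ≥ N, rc L (s n) = rc L (s N) := by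
  obtain ⟨k, M, r, hr, rfl⟩ := hL
  choose f hf using fun n => PDFA.exists_evalFrom_of_mem_Pref (hs n)
  have := hr.1
  obtain ⟨N, hN⟩ := exists_forall_ge_eq_of_rel_or_eq (r := r) (f := f) fun n =>
    hr.rel_or_eq_of_colex (hmono n) (hf n) (hf (n + 1))
  exact ⟨N, fun n hn => by rw [PDFA.rc_accepts (hf n), PDFA.rc_accepts (hf N), hN n hn]⟩

end Colex

section Languages

section KleeneAlgebra

variable {K : Type*} [KleeneAlgebra K]

theorem kstar_mul_eq_add (x y : K) : x∗ * y = y + x * (x∗ * y) := by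
  conv_lhs => rw [← one_add_mul_kstar, add_mul, one_mul, mul_assoc]

theorem kstar_add (x y : K) : (x + y)∗ = (x∗ * y)∗ * x∗ := by
  apply le_antisymm
  · set z := (x∗ * y)∗ * x∗
    have hunfold : x∗ + x∗ * y * z = z := (kstar_mul_eq_add (x∗ * y) x∗).symm
    have hx : x * z ≤ z := calc
      x * z = x * x∗ + x * x∗ * y * z := by
        conv_lhs => rw [← hunfold]
        simp only [mul_add, mul_assoc]
      _ ≤ x∗ + x∗ * y * z := by grw [mul_kstar_le_kstar]
      _ = z := hunfold
    have hy : y * z ≤ z := calc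
      y * z = 1 * y * z := by rw [one_mul]
      _ ≤ x∗ * y * z := by grw [one_le_kstar (a := x)]
      _ ≤ z := le_add_self.trans_eq hunfold
    refine kstar_le_of_mul_le_right (one_le_mul one_le_kstar one_le_kstar) ?_
    rw [add_mul]
    exact add_le hx hy
  · have hx : x∗ ≤ (x + y)∗ := kstar_mono le_self_add
    have hy : y ≤ (x + y)∗ := le_add_self.trans le_kstar
    calc (x∗ * y)∗ * x∗ ≤ ((x + y)∗ * (x + y)∗)∗ * (x + y)∗ :=
          mul_le_mul' (kstar_mono (mul_le_mul' hx hy)) hx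
      _ = (x + y)∗ := by simp only [kstar_mul_kstar, kstar_idem]

end KleeneAlgebra

variable {A : Type}

/-- The words of length one over the sub-alphabet `S`. -/
def letters (S : Set A) : Language A := (fun x => [x]) '' S

theorem letters_singleton (x : A) : letters {x} = {[x]} := Set.image_singleton

theorem letters_union (S T : Set A) : letters (S ∪ T) = letters S + letters T :=
  Set.image_union ..

theorem mem_letters {S : Set A} {w : List A} : w ∈ letters S ↔ ∃ x ∈ S, [x] = w := Iff.rfl

theorem nil_notMem_letters_mul {S : Set A} {X : Language A} : [] ∉ letters S * X := by
  simp [Language.mem_mul, mem_letters]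

theorem cons_mem_letters_mul {S : Set A} {X : Language A} {x : A} {v : List A} :
    x :: v ∈ letters S * X ↔ x ∈ S ∧ v ∈ X := by
  simp [Language.mem_mul, mem_letters]

theorem nil_mem_wordsOver (S : Set A) : [] ∈ wordsOver S := List.forall_mem_nil _

theorem cons_mem_wordsOver {S : Set A} {x : A} {w : List A} :
    x :: w ∈ wordsOver S ↔ x ∈ S ∧ w ∈ wordsOver S := List.forall_mem_cons

theorem append_mem_wordsOver {S : Set A} {u v : List A} :
    u ++ v ∈ wordsOver S ↔ u ∈ wordsOver S ∧ v ∈ wordsOver S := List.forall_mem_append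

theorem replicate_mem_wordsOver {S : Set A} {x : A} (hx : x ∈ S) (n : ℕ) :
    List.replicate n x ∈ wordsOver S :=
  fun _ hy => List.eq_of_mem_replicate hy ▸ hx

theorem wordsOver_mono {S T : Set A} (h : S ⊆ T) : wordsOver S ≤ wordsOver T :=
  fun _ hw x hx => h (hw x hx)

theorem wordsOver_eq_kstar (S : Set A) : wordsOver S = (letters S)∗ := by
  apply le_antisymm
  · intro w hw
    induction w with
    | nil => exact Language.nil_mem_kstar _
    | cons x w ih =>
      obtain ⟨hx, hw⟩ := cons_mem_wordsOver.1 hw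
      exact mul_kstar_le_kstar (a := letters S) (cons_mem_letters_mul.2 ⟨hx, ih hw⟩)
  · have hmul : letters S * wordsOver S ≤ wordsOver S := by
      rintro (_ | ⟨x, w⟩) h
      · exact nil_mem_wordsOver S
      · exact cons_mem_wordsOver.2 (cons_mem_letters_mul.1 h)
    refine kstar_le_of_mul_le_right ?_ hmul
    rintro _ rfl
    exact nil_mem_wordsOver S

theorem wordsOver_union (S T : Set A) :
    wordsOver (S ∪ T) = (wordsOver S * letters T)∗ * wordsOver S := by
  simp only [wordsOver_eq_kstar, letters_union, kstar_add]

variable {L : Language A} {c : A}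

theorem mem_kstar_mul_singleton_mul_iff {v : List A} :
    v ∈ (L * {[c]})∗ * L ↔ v ∈ L ∨ ∃ l ∈ L, ∃ u ∈ (L * {[c]})∗ * L, v = l ++ c :: u := by
  have hcons (w : List A) : w ∈ {[c]} * ((L * {[c]})∗ * L) ↔
      ∃ u ∈ (L * {[c]})∗ * L, w = c :: u := by
    cases w with
    | nil => simp [← letters_singleton, nil_notMem_letters_mul]
    | cons x w => simp [← letters_singleton, cons_mem_letters_mul, and_comm]
  conv_lhs => rw [kstar_mul_eq_add, mul_assoc L, Language.mem_add, Language.mem_mul]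
  simp only [hcons]
  grind

theorem replicate_mem_kstar_mul_singleton_mul (hL : [] ∈ L) (n : ℕ) :
    List.replicate n c ∈ (L * {[c]})∗ * L := by
  induction n with
  | zero => exact mem_kstar_mul_singleton_mul_iff.2 (.inl hL)
  | succ n ih => exact mem_kstar_mul_singleton_mul_iff.2 (.inr ⟨[], hL, _, ih, rfl⟩)

theorem mem_of_replicate_append_mem_kstar_mul_singleton_mul (hL : ∀ l ∈ L, c ∉ l) {w : List A}
    (hw : c ∉ w) {n : ℕ} (h : List.replicate n c ++ w ∈ (L * {[c]})∗ * L) : w ∈ L := by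
  induction n with
  | zero =>
    rcases mem_kstar_mul_singleton_mul_iff.1 h with h | ⟨l, -, u, -, rfl : w = l ++ c :: u⟩
    · exact h
    · simp at hw
  | succ n ih =>
    rw [List.replicate_succ, List.cons_append] at h
    rcases mem_kstar_mul_singleton_mul_iff.1 h with h | ⟨_ | ⟨x, l⟩, hl, u, hu, heq⟩
    · exact absurd List.mem_cons_self (hL _ h)
    · obtain ⟨-, rfl⟩ := List.cons_eq_cons.1 heq
      exact ih hu
    · obtain ⟨rfl, -⟩ := List.cons_eq_cons.1 heq
      exact absurd List.mem_cons_self (hL _ hl)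

end Languages

section letterDFA

variable {A : Type}

open Classical in
/-- The automaton for `I·J*` that remembers only the last letter read; `⊥` is the state in which no
letter has been read yet. -/
noncomputable def letterDFA (I J : Set A) : PDFA A (WithBot ↥(I ∪ J)) where
  init := ⊥
  trans q x :=
    if h : x ∈ if q = ⊥ then I else J then
      some (WithBot.some ⟨x, by split at h; exacts [.inl h, .inr h]⟩)
    else none
  accept q := q ≠ ⊥

variable {I J : Set A}

theorem letterDFA_trans_bot_eq_some {x : A} {q : WithBot ↥(I ∪ J)} :
    (letterDFA I J).trans ⊥ x = some q ↔ ∃ h : x ∈ I, q = WithBot.some ⟨x, .inl h⟩ := by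
  by_cases h : x ∈ I <;> simp [letterDFA, h, eq_comm]

theorem letterDFA_trans_coe_eq_some {x : A} {p : ↥(I ∪ J)} {q : WithBot ↥(I ∪ J)} :
    (letterDFA I J).trans p x = some q ↔ ∃ h : x ∈ J, q = WithBot.some ⟨x, .inr h⟩ := by
  by_cases h : x ∈ J <;> simp [letterDFA, h, eq_comm]

theorem exists_eq_coe_of_letterDFA_trans {x : A} {p q : WithBot ↥(I ∪ J)}
    (h : (letterDFA I J).trans p x = some q) : ∃ hx, q = WithBot.some ⟨x, hx⟩ := by
  cases p with
  | bot => exact (letterDFA_trans_bot_eq_some.1 h).imp' Or.inl fun _ => id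
  | coe p => exact (letterDFA_trans_coe_eq_some.1 h).imp' Or.inr fun _ => id

theorem mem_letterDFA_acceptsFrom_coe {p : ↥(I ∪ J)} {w : List A} :
    w ∈ (letterDFA I J).acceptsFrom p ↔ w ∈ wordsOver J := by
  induction w generalizing p with
  | nil => simp [PDFA.nil_mem_acceptsFrom, nil_mem_wordsOver, letterDFA]
  | cons x w ih =>
    simp [PDFA.cons_mem_acceptsFrom, letterDFA_trans_coe_eq_some, cons_mem_wordsOver, ih]

theorem letterDFA_accepts : (letterDFA I J).accepts = letters I * wordsOver J := by
  ext w
  change w ∈ (letterDFA I J).acceptsFrom ⊥ ↔ w ∈ letters I * wordsOver J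
  cases w with
  | nil => simp [PDFA.nil_mem_acceptsFrom, nil_notMem_letters_mul, letterDFA]
  | cons x w =>
    simp [PDFA.cons_mem_acceptsFrom, letterDFA_trans_bot_eq_some, cons_mem_letters_mul,
      mem_letterDFA_acceptsFrom_coe]

variable [LinearOrder A]

theorem isWheelerOrder_letterDFA : IsWheelerOrder (letterDFA I J) (· < ·) := by
  refine ⟨inferInstance, fun q hq => bot_lt_iff_ne_bot.2 hq, fun q x h => ?_,
    fun u₁ a₁ v₁ u₂ a₂ v₂ h₁ h₂ => ?_⟩
  · obtain ⟨hx, heq⟩ := exists_eq_coe_of_letterDFA_trans h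
    exact WithBot.bot_ne_coe heq
  · obtain ⟨_, rfl⟩ := exists_eq_coe_of_letterDFA_trans h₁
    obtain ⟨_, rfl⟩ := exists_eq_coe_of_letterDFA_trans h₂
    exact ⟨fun h => WithBot.coe_lt_coe.2 h, by rintro rfl -; exact .inr rfl⟩

theorem isWheelerLang_letters_mul_wordsOver (hI : I.Finite) (hJ : J.Finite) :
    IsWheelerLang (letters I * wordsOver J) := by
  have : Finite (WithBot ↥(I ∪ J)) :=
    have := (hI.union hJ).to_subtype
    inferInstanceAs (Finite (Option ↥(I ∪ J)))
  rw [← letterDFA_accepts]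
  exact isWheelerOrder_letterDFA.isWheelerLang_accepts

end letterDFA

section Reduction

variable {A : Type}

/-- The sequence `a, b, ac, bc, acc, bcc, …`, which is co-lexicographically increasing when
`a < b < c`. -/
def zigzag (a b c : A) : ℕ → List A
  | 0 => [a]
  | 1 => [b]
  | n + 2 => zigzag a b c n ++ [c]

theorem zigzag_two_mul (a b c : A) (n : ℕ) :
    zigzag a b c (2 * n) = a :: List.replicate n c := by
  induction n with
  | zero => rfl
  | succ n ih => rw [Nat.mul_succ, zigzag, ih, List.replicate_succ', List.cons_append]

theorem zigzag_two_mul_add_one (a b c : A) (n : ℕ) :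
    zigzag a b c (2 * n + 1) = b :: List.replicate n c := by
  induction n with
  | zero => rfl
  | succ n ih =>
    rw [Nat.mul_succ, add_right_comm, zigzag, ih, List.replicate_succ', List.cons_append]

theorem colex_zigzag_succ [LinearOrder A] {a b c : A} (hab : a < b) (hbc : b < c) :
    ∀ n, Colex (zigzag a b c n) (zigzag a b c (n + 1))
  | 0 => colex_concat_concat (u := []) (v := []).2 (.inl hab)
  | 1 => colex_concat_concat (u := []) (v := [a]).2 (.inl hbc)
  | n + 2 => colex_concat_concat.2 (.inr ⟨rfl, colex_zigzag_succ hab hbc n⟩)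

/-- The language `L''` whose Wheelerness encodes the universality of `L` over `S`. -/
def reduction (S : Set A) (a b c : A) (L : Language A) : Language A :=
  {[a]} * ((L * {[c]})∗ * L) + {[b]} * wordsOver (S ∪ {c})

variable {S : Set A} {a b c : A} {L : Language A}

theorem cons_mem_reduction {x : A} {v : List A} :
    x :: v ∈ reduction S a b c L ↔
      x = a ∧ v ∈ (L * {[c]})∗ * L ∨ x = b ∧ v ∈ wordsOver (S ∪ {c}) := by
  rw [reduction, Language.mem_add, ← letters_singleton a, ← letters_singleton b,
    cons_mem_letters_mul, cons_mem_letters_mul, Set.mem_singleton_iff, Set.mem_singleton_iff]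

theorem reduction_wordsOver (S : Set A) (a b c : A) :
    reduction S a b c (wordsOver S) = letters {a, b} * wordsOver (S ∪ {c}) := by
  rw [reduction, ← letters_singleton, ← letters_singleton, ← letters_singleton, ← wordsOver_union,
    ← add_mul, ← letters_union, Set.singleton_union]

theorem zigzag_mem_Pref_reduction (hL : [] ∈ L) (n : ℕ) :
    zigzag a b c n ∈ Pref (reduction S a b c L) := by
  refine ⟨[], ?_⟩
  change _ ∈ reduction S a b c L
  rw [List.append_nil]
  obtain ⟨k, rfl | rfl⟩ := n.even_or_odd'
  · rw [zigzag_two_mul, cons_mem_reduction]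
    exact .inl ⟨rfl, replicate_mem_kstar_mul_singleton_mul hL k⟩
  · rw [zigzag_two_mul_add_one, cons_mem_reduction]
    exact .inr ⟨rfl, replicate_mem_wordsOver (.inr rfl) k⟩

theorem wordsOver_le_of_isWheelerLang_reduction [LinearOrder A] (hab : a < b) (hbc : b < c)
    (hc : c ∉ S) (hsub : L ≤ wordsOver S) (hL : [] ∈ L)
    (hW : IsWheelerLang (reduction S a b c L)) : wordsOver S ≤ L := by
  intro w hw
  obtain ⟨N, hN⟩ :=
    hW.exists_forall_ge_rc_eq (zigzag_mem_Pref_reduction hL) (colex_zigzag_succ hab hbc)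
  have hrc : rc (reduction S a b c L) (a :: List.replicate N c) =
      rc (reduction S a b c L) (b :: List.replicate N c) := by
    rw [← zigzag_two_mul, ← zigzag_two_mul_add_one, hN (2 * N) (by lia), hN (2 * N + 1) (by lia)]
  have hb : w ∈ rc (reduction S a b c L) (b :: List.replicate N c) :=
    cons_mem_reduction.2 <| .inr ⟨rfl, append_mem_wordsOver.2
      ⟨replicate_mem_wordsOver (.inr rfl) N, wordsOver_mono Set.subset_union_left hw⟩⟩
  have ha : a :: (List.replicate N c ++ w) ∈ reduction S a b c L := (Set.ext_iff.1 hrc w).2 hb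
  obtain ⟨-, hK⟩ | ⟨hba, -⟩ := cons_mem_reduction.1 ha
  · exact mem_of_replicate_append_mem_kstar_mul_singleton_mul
      (fun l hl hcl => hc (hsub hl c hcl)) (fun hcw => hc (hw c hcw)) hK
  · exact absurd hba hab.ne

end Reduction

theorem statement9_general {A : Type} [LinearOrder A] {S : Set A} (hS : S.Finite) {a b c : A}
    (hab : a < b) (hbc : b < c) (hc : c ∉ S) {L : Language A} (hsub : L ≤ wordsOver S)
    (hL : [] ∈ L) :
    L = wordsOver S ↔
      IsWheelerLang ({[a]} * ((L * {[c]})∗ * L) + {[b]} * wordsOver (S ∪ {c}) : Language A) := by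
  constructor
  · rintro rfl
    have hW := isWheelerLang_letters_mul_wordsOver (Set.toFinite {a, b})
      (hS.union (Set.finite_singleton c))
    rwa [← reduction_wordsOver] at hW
  · intro hW
    exact hsub.antisymm (wordsOver_le_of_isWheelerLang_reduction hab hbc hc hsub hL hW)

/-- the reduction in Proposition 1 of the paper: for every
linear order on `Σ' = Σ ∪ {a,b,c}` with `a ≺ b ≺ c`,
`L = Σ*` iff `L'' = a·((L·c)*·L) + b·(Σ ∪ {c})*` is Wheeler. -/
theorem statement9 {A : Type} [Fintype A] [inst : LinearOrder A]
    (S : Set A) (a b c : A)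
    (hab : a < b) (hbc : b < c)
    (ha : a ∉ S) (hb : b ∉ S) (hc : c ∉ S)
    (hcover : ∀ x : A, x ∈ S ∨ x = a ∨ x = b ∨ x = c)
    (L : Language A) (hsub : ∀ w ∈ L, ∀ x ∈ w, x ∈ S) (heps : [] ∈ L)
    (hreg : IsRegular L)
    (L'' : Language A)
    (hL'' : L'' = {[a]} * ((L * {[c]})∗ * L) + {[b]} * wordsOver (S ∪ {c})) :
    L = wordsOver S ↔ IsWheelerLang L'' := by
  subst hL''
  exact statement9_general S.toFinite hab hbc hc hsub heps

end Statement9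

end WheelerPaper
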